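/- arXiv:2303.17936 — 2 statements merged into one kernel-verified Lean document; each statement's English description precedes it below -/
import Mathlib

section
/- The weight-two modular form 𝒫̃ on Γ₀(2) satisfies the third-order nonlinear ODE: for every τ ∈ ℍ, 3𝒫̃²(𝒫̃''')² − 36(𝒫̃𝒫̃'𝒫̃'' − (𝒫̃')³)𝒫̃''' + 32𝒫̃(𝒫̃'')³ − 3(12(𝒫̃')² + 𝒫̃⁴)(𝒫̃'')² + 9𝒫̃³(𝒫̃')²𝒫̃'' − (27/4)𝒫̃²(𝒫̃')⁴ = 0. -/
open Complex

noncomputable section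

/-- The normalized derivative `F' = (2πi)⁻¹ dF/dτ`. -/
def nderiv (F : ℂ → ℂ) : ℂ → ℂ := fun τ => (2 * Real.pi * Complex.I)⁻¹ * deriv F τ

/-- `q = e^{2πiτ}`. -/
def qq (τ : ℂ) : ℂ := Complex.exp (2 * Real.pi * Complex.I * τ)

/-- The level-two modular form `𝒫̃(τ) = 1 + 24 Σ_{n≥1} n qⁿ/(1+qⁿ)`. -/
def EPt : ℂ → ℂ := fun τ =>
  1 + 24 * ∑' n : ℕ, ((n : ℂ) + 1) * qq τ ^ (n + 1) / (1 + qq τ ^ (n + 1))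

section Aux
open UpperHalfPlane hiding I
open EisensteinSeries ModularForm Manifold ModularGroup Filter Topology MatrixGroups
open Derivative

/-- weight `k` invariance under the generators, pointwise -/
def WInv (k : ℕ) (F : ℍ → ℂ) : Prop :=
  (∀ z : ℍ, F (S • z) = (z : ℂ) ^ k * F z) ∧ ∀ z : ℍ, F (T • z) = F z

lemma slashS (k : ℕ) (F : ℍ → ℂ) (z : ℍ) :
    (F ∣[(k : ℤ)] S) z = F (S • z) * ((z : ℂ) ^ k)⁻¹ := by
  rw [SL_slash_apply, denom_S, zpow_neg, zpow_natCast]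

lemma slashT (k : ℕ) (F : ℍ → ℂ) (z : ℍ) :
    (F ∣[(k : ℤ)] T) z = F (T • z) := by
  rw [SL_slash_apply]
  rw [ModularGroup.denom_apply]
  simp [T]

lemma inv_slash {k : ℕ} {F : ℍ → ℂ} (h : WInv k F) (γ : SL(2, ℤ)) : F ∣[(k : ℤ)] γ = F := by
  refine SlashInvariantForm.slash_action_generators_SL2Z ?_ ?_ γ
  · ext z
    rw [slashS, h.1]
    have : (z : ℂ) ^ k ≠ 0 := pow_ne_zero _ (ne_zero z)
    field_simp
  · ext z
    rw [slashT, h.2]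

lemma inv_of_slash {k : ℕ} {F : ℍ → ℂ} (hS : F ∣[(k : ℤ)] S = F) (hT : F ∣[(k : ℤ)] T = F) :
    WInv k F := by
  constructor
  · intro z
    have := congrFun hS z
    rw [slashS] at this
    have h0 : (z : ℂ) ^ k ≠ 0 := pow_ne_zero _ (ne_zero z)
    rw [← this]; field_simp
  · intro z
    rw [← slashT k F, hT]

/-- A cusp form of weight less than twelve vanishes. -/
lemma key {k : ℕ} (hk : k < 12) {F : ℍ → ℂ} (hF : MDiff F) (h : WInv k F)
    (h0 : Tendsto F atImInfty (𝓝 0)) (z : ℍ) : F z = 0 := by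
  let f : CuspForm 𝒮ℒ (k : ℤ) :=
    { toFun := F
      slash_action_eq' := fun _ ⟨γ, hγ⟩ ↦ hγ ▸ inv_slash h γ
      holo' := hF
      zero_at_cusps' {c} hc := by
        rw [Subgroup.IsArithmetic.isCusp_iff_isCusp_SL2Z] at hc
        rw [OnePoint.isZeroAt_iff_forall_SL2Z hc]
        intro γ _
        rw [inv_slash h γ]
        exact h0 }
  have hf : f = 0 := rank_zero_iff_forall_zero.mp
    (CuspForm.rank_eq_zero_of_weight_lt_twelve (by exact_mod_cast hk)) f
  exact congrFun (congrArg DFunLike.coe hf) z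

lemma Einv {k : ℕ} (hk : 3 ≤ k) : WInv k (E hk) := by
  apply inv_of_slash
  · exact SlashInvariantFormClass.slash_action_eq (E hk) _ ⟨S, rfl⟩
  · exact SlashInvariantFormClass.slash_action_eq (E hk) _ ⟨T, rfl⟩

lemma Emd {k : ℕ} (hk : 3 ≤ k) : MDiff (E hk : ℍ → ℂ) := ModularFormClass.holo (E hk)

lemma Elim {k : ℕ} (hk : 3 ≤ k) (h2 : Even k) : Tendsto (E hk) atImInfty (𝓝 1) := by
  have hb := ModularFormClass.exp_decay_sub_atImInfty' (E hk)
  have hv : valueAtInfty (E hk) = 1 := by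
    rw [← E_qExpansion_coeff_zero hk h2]
    exact (qExpansion_coeff_zero one_pos
      (ModularFormClass.analyticAt_cuspFunction_zero (E hk) one_pos one_mem_strictPeriods_SL)
      (SlashInvariantFormClass.periodic_comp_ofComplex (E hk) one_mem_strictPeriods_SL)).symm
  obtain ⟨c, hc, hO⟩ := hb
  rw [hv] at hO
  have ht : Tendsto (fun τ : ℍ ↦ Real.exp (-c * τ.im)) atImInfty (𝓝 0) := by
    have : Tendsto (fun τ : ℍ ↦ τ.im) atImInfty atTop := tendsto_comap
    refine Real.tendsto_exp_atBot.comp (Tendsto.const_mul_atTop_of_neg (by linarith) this)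
  have := (hO.trans_tendsto ht).add_const 1
  simpa using this

lemma E2lim : Tendsto E2 atImInfty (𝓝 1) := by
  have hf : ∀ τ : ℍ, HasSum (fun m : ℕ ↦ (if m = 0 then 1 else -24 * (ArithmeticFunction.sigma 1 m) : ℂ) •
      Function.Periodic.qParam 1 τ ^ m) (E2 τ) := fun τ ↦ by
    simpa only [Function.Periodic.qParam, ofReal_one, div_one] using hasSum_qExpansion_E2 (z := τ)
  set c : ℕ → ℂ := fun m ↦ if m = 0 then 1 else -24 * (ArithmeticFunction.sigma 1 m) with hc
  have hq0 : ∀ τ : ℍ, Function.Periodic.qParam 1 (τ : ℂ) ≠ 0 :=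
    fun τ ↦ Function.Periodic.qParam_ne_zero _
  have hg : ∀ τ : ℍ, HasSum (fun m ↦ c (m + 1) • Function.Periodic.qParam 1 (τ : ℂ) ^ m)
      ((E2 τ - 1) / Function.Periodic.qParam 1 (τ : ℂ)) := fun τ ↦ by
    have h1 := ((hasSum_nat_add_iff' 1).mpr (hf τ)).div_const (Function.Periodic.qParam 1 (τ : ℂ))
    have h2 := hq0 τ
    convert! h1 using 1
    · ext m
      simp only [smul_eq_mul, pow_succ]
      field_simp
      simp [hc]
    · simp
  have hbd := isBoundedAtImInfty_of_hasSum_qExpansion one_pos hg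
  have h3 : Tendsto (fun τ : ℍ ↦ E2 τ - 1) atImInfty (𝓝 0) := by
    have h4 := Asymptotics.IsBigO.mul hbd (Asymptotics.isBigO_refl
      (fun τ : ℍ ↦ Function.Periodic.qParam 1 (τ : ℂ)) atImInfty).norm_right
    simp only [Pi.one_apply, one_mul] at h4
    refine (h4.trans_tendsto (by simpa using (qParam_tendsto_atImInfty one_pos).norm)).congr
      fun τ ↦ ?_
    have h2 := hq0 τ
    field_simp
  simpa using h3.add_const 1

lemma E2S (z : ℍ) : E2 (S • z) = (z : ℂ) ^ 2 * E2 z - 6 * I * z / Real.pi := by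
  have h := congrFun (E2_slash_action S) z
  have h1 := slashS 2 E2 z
  rw [show ((2 : ℕ) : ℤ) = 2 from rfl] at h1
  rw [h1] at h
  simp only [Pi.sub_apply, Pi.smul_apply, D2_S, riemannZeta_two, smul_eq_mul] at h
  have h0 : (z : ℂ) ≠ 0 := ne_zero z
  have hp : (Real.pi : ℂ) ≠ 0 := by exact_mod_cast Real.pi_ne_zero
  field_simp at h ⊢
  linear_combination h

lemma E2T (z : ℍ) : E2 (T • z) = E2 z := by
  have h := congrFun (E2_slash_action T) z
  have h1 := slashT 2 E2 z
  rw [show ((2 : ℕ) : ℤ) = 2 from rfl] at h1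
  rw [h1] at h
  simpa [D2_T] using h

/-- Cauchy estimate: the derivative of a bounded function decays. -/
lemma Dlim {F : ℍ → ℂ} (hF : MDiff F) {c : ℂ} (hb : Tendsto F atImInfty (𝓝 c)) :
    Tendsto (D F) atImInfty (𝓝 0) := by
  have hb1 : ∀ᶠ z in atImInfty, ‖F z‖ ≤ ‖c‖ + 1 := by
    filter_upwards [hb.norm.eventually (gt_mem_nhds (lt_add_one ‖c‖))] with z hz using hz.le
  obtain ⟨A, hA⟩ := (atImInfty_mem _).mp hb1
  have him : Tendsto (fun τ : ℍ ↦ τ.im) atImInfty atTop := tendsto_comap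
  have hlim : Tendsto (fun z : ℍ ↦ ‖(2 * Real.pi * I : ℂ)⁻¹‖ * ((‖c‖ + 1) / (z.im / 2)))
      atImInfty (𝓝 0) := by
    have := (Tendsto.const_div_atTop (him.atTop_div_const (by norm_num : (0 : ℝ) < 2))
      (‖c‖ + 1)).const_mul ‖(2 * Real.pi * I : ℂ)⁻¹‖
    simpa using this
  refine squeeze_zero_norm' ?_ hlim
  filter_upwards [him.eventually_ge_atTop (2 * A)] with z hz
  rw [normalizedDerivOfComplex, norm_mul]
  gcongr
  have hzp := z.im_pos
  have hsub : ∀ w ∈ Metric.closedBall (z : ℂ) (z.im / 2), z.im / 2 ≤ w.im := by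
    intro w hw
    rw [Metric.mem_closedBall, dist_eq_norm] at hw
    have h1 := (abs_im_le_norm (w - z)).trans hw
    rw [sub_im, abs_le] at h1
    have : (z : ℂ).im = z.im := rfl
    linarith [h1.1]
  apply Complex.norm_deriv_le_of_forall_mem_sphere_norm_le (by linarith)
  · apply DifferentiableOn.diffContOnCl_ball (U := {z | 0 < z.im})
    · exact UpperHalfPlane.mdifferentiable_iff.mp hF
    · intro w hw
      have := hsub w hw
      simp only [Set.mem_ofPred_eq]; linarith
  · intro w hw
    have h1 := hsub w (Metric.sphere_subset_closedBall hw)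
    have h2 : 0 < w.im := by linarith
    rw [Function.comp_apply, ofComplex_apply_of_im_pos h2]
    apply hA
    change A ≤ w.im
    linarith

lemma md_add {f g : ℍ → ℂ} (hf : MDiff f) (hg : MDiff g) : MDiff (fun z ↦ f z + g z) := hf.add hg
lemma md_sub {f g : ℍ → ℂ} (hf : MDiff f) (hg : MDiff g) : MDiff (fun z ↦ f z - g z) := hf.sub hg
lemma md_mul {f g : ℍ → ℂ} (hf : MDiff f) (hg : MDiff g) : MDiff (fun z ↦ f z * g z) := hf.mul hg
lemma md_smul (c : ℂ) {f : ℍ → ℂ} (hf : MDiff f) : MDiff (fun z ↦ c * f z) :=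
  md_mul mdifferentiable_const hf

lemma serre_inv {k : ℕ} {F : ℍ → ℂ} (hF : MDiff F) (h : WInv k F) :
    WInv (k + 2) (fun z ↦ D F z - k / 12 * (E2 z * F z)) := by
  have e : (fun z ↦ D F z - k / 12 * (E2 z * F z)) = serreDerivative ((k : ℤ) : ℂ) F := by
    ext z; rw [serreDerivative_apply]; push_cast; ring
  rw [e]
  apply inv_of_slash
  · exact serreDerivative_slash_invariant hF (inv_slash h S)
  · exact serreDerivative_slash_invariant hF (inv_slash h T)

abbrev e4 : ℍ → ℂ := fun z ↦ E (k := 4) (by norm_num) z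
abbrev e6 : ℍ → ℂ := fun z ↦ E (k := 6) (by norm_num) z

lemma e4inv : WInv 4 e4 := Einv _
lemma e6inv : WInv 6 e6 := Einv _
lemma e4md : MDiff e4 := Emd _
lemma e6md : MDiff e6 := Emd _
lemma e4lim : Tendsto e4 atImInfty (𝓝 1) := Elim _ ⟨2, rfl⟩
lemma e6lim : Tendsto e6 atImInfty (𝓝 1) := Elim _ ⟨3, rfl⟩

lemma De4 (z : ℍ) : D e4 z = (E2 z * e4 z - e6 z) / 3 := by
  have hi := serre_inv e4md e4inv
  have := key (k := 6) (by norm_num)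
    (F := fun z ↦ (D e4 z - (4 : ℕ) / 12 * (E2 z * e4 z)) + 1 / 3 * e6 z)
    (md_add (md_sub (normalizedDerivOfComplex_mdifferentiable e4md)
      (md_smul _ (md_mul E2_mdifferentiable e4md))) (md_smul _ e6md)) ?_ ?_ z
  · push_cast at this; linear_combination this
  · constructor
    · intro z; have h1 := hi.1 z; have h2 := e6inv.1 z
      simp only at h1 h2 ⊢
      rw [h1, h2]; ring
    · intro z; have h1 := hi.2 z; have h2 := e6inv.2 z
      simp only at h1 h2 ⊢
      rw [h1, h2]
  · have := ((Dlim e4md e4lim).sub ((E2lim.mul e4lim).const_mul (((4 : ℕ) : ℂ) / 12))).add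
      (e6lim.const_mul (1 / 3))
    convert! this using 2; norm_num

lemma De6 (z : ℍ) : D e6 z = (E2 z * e6 z - e4 z ^ 2) / 2 := by
  have hi := serre_inv e6md e6inv
  have := key (k := 8) (by norm_num)
    (F := fun z ↦ (D e6 z - (6 : ℕ) / 12 * (E2 z * e6 z)) + 1 / 2 * (e4 z * e4 z))
    (md_add (md_sub (normalizedDerivOfComplex_mdifferentiable e6md)
      (md_smul _ (md_mul E2_mdifferentiable e6md))) (md_smul _ (md_mul e4md e4md))) ?_ ?_ z
  · push_cast at this; linear_combination this
  · constructor
    · intro z; have h1 := hi.1 z; have h2 := e4inv.1 z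
      simp only at h1 h2 ⊢
      rw [h1, h2]; ring
    · intro z; have h1 := hi.2 z; have h2 := e4inv.2 z
      simp only at h1 h2 ⊢
      rw [h1, h2]
  · have := ((Dlim e6md e6lim).sub ((E2lim.mul e6lim).const_mul (((6 : ℕ) : ℂ) / 12))).add
      ((e4lim.mul e4lim).const_mul (1 / 2))
    convert! this using 2; norm_num

lemma DE2_inv : WInv 4 (fun z ↦ D E2 z - 1 / 12 * (E2 z * E2 z)) := by
  have hp : (Real.pi : ℂ) ≠ 0 := by exact_mod_cast Real.pi_ne_zero
  have hS : ∀ z : ℍ, D E2 (S • z) = (z : ℂ) ^ 4 * D E2 z - I * z ^ 3 / Real.pi * E2 z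
      - 3 * z ^ 2 / Real.pi ^ 2 := by
    intro z
    have h0 : (z : ℂ) ≠ 0 := ne_zero z
    have h := congrFun (normalizedDerivOfComplex_SL_slash (k := 2) (γ := S) E2_mdifferentiable) z
    have hs : E2 ∣[(2 : ℤ)] S = fun z : ℍ ↦ E2 z - 6 * I / Real.pi * (z : ℂ)⁻¹ := by
      ext w
      have h1 := slashS 2 E2 w
      rw [show ((2 : ℕ) : ℤ) = 2 from rfl] at h1
      rw [h1, E2S]
      have hw : (w : ℂ) ≠ 0 := ne_zero w
      field_simp
    have hd : D (fun z : ℍ ↦ E2 z - 6 * I / Real.pi * (z : ℂ)⁻¹) z =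
        D E2 z + 3 / Real.pi ^ 2 * ((z : ℂ) ^ 2)⁻¹ := by
      simp only [normalizedDerivOfComplex]
      have hE := (UpperHalfPlane.mdifferentiableAt_iff.mp (E2_mdifferentiable z)).hasDerivAt
      have hi := (hasDerivAt_inv h0).const_mul (6 * I / Real.pi)
      have h3 : HasDerivAt ((fun z : ℍ ↦ E2 z - 6 * I / Real.pi * (z : ℂ)⁻¹) ∘ ofComplex)
          (deriv (E2 ∘ ofComplex) z - 6 * I / Real.pi * -((z : ℂ) ^ 2)⁻¹) z := by
        refine (hE.sub hi).congr_of_eventuallyEq ?_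
        filter_upwards [isOpen_upperHalfPlaneSet.mem_nhds z.im_pos] with w hw
        simp [ofComplex_apply_of_im_pos hw]
      rw [h3.deriv]
      field_simp
      ring
    have h4 := slashS 4 (D E2) z
    rw [show ((4 : ℕ) : ℤ) = 2 + 2 from rfl] at h4
    rw [hs, hd] at h
    simp only [Pi.sub_apply, h4] at h
    rw [denom_S] at h
    have hS10 : (S 1 0 : ℤ) = 1 := by simp [S]
    rw [hS10] at h
    push_cast at h
    have hI : I ^ 2 = -1 := I_sq
    have hI0 := I_ne_zero
    have hinv : (2 * (Real.pi : ℂ) * I)⁻¹ = -I / (2 * Real.pi) := by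
      field_simp
      linear_combination hI
    rw [hinv] at h
    field_simp at h ⊢
    linear_combination -h + 6 * (z : ℂ) ^ 2 * hI
  constructor
  · intro z
    simp only
    rw [hS, E2S]
    have h0 : (z : ℂ) ≠ 0 := ne_zero z
    have hI : I ^ 2 = -1 := I_sq
    field_simp
    linear_combination (-36 : ℂ) * hI
  · intro z
    have h := congrFun (normalizedDerivOfComplex_SL_slash (k := 2) (γ := T) E2_mdifferentiable) z
    have hs : E2 ∣[(2 : ℤ)] T = E2 := by
      ext w
      have h1 := slashT 2 E2 w
      rw [show ((2 : ℕ) : ℤ) = 2 from rfl] at h1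
      rw [h1, E2T]
    have h4 := slashT 4 (D E2) z
    rw [show ((4 : ℕ) : ℤ) = 2 + 2 from rfl] at h4
    have hS10 : (T 1 0 : ℤ) = 0 := by simp [T]
    rw [hs] at h
    simp only [Pi.sub_apply, h4, hS10] at h
    simp only [E2T, h]
    simp

lemma DE2 (z : ℍ) : D E2 z = (E2 z ^ 2 - e4 z) / 12 := by
  have hi := DE2_inv
  have := key (k := 4) (by norm_num)
    (F := fun z ↦ (D E2 z - 1 / 12 * (E2 z * E2 z)) + 1 / 12 * e4 z)
    (md_add (md_sub (normalizedDerivOfComplex_mdifferentiable E2_mdifferentiable)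
      (md_smul _ (md_mul E2_mdifferentiable E2_mdifferentiable))) (md_smul _ e4md)) ?_ ?_ z
  · linear_combination this
  · constructor
    · intro z; have h1 := hi.1 z; have h2 := e4inv.1 z
      simp only at h1 h2 ⊢
      rw [h1, h2]; ring
    · intro z; have h1 := hi.2 z; have h2 := e4inv.2 z
      simp only at h1 h2 ⊢
      rw [h1, h2]
  · have := ((Dlim E2_mdifferentiable E2lim).sub ((E2lim.mul E2lim).const_mul ((1 : ℂ) / 12))).add
      (e4lim.const_mul (1 / 12))
    convert! this using 2; norm_num

/-- The affine map `z ↦ a z + b` of the upper half-plane. -/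
def aff (a b : ℝ) (ha : 0 < a) (z : ℍ) : ℍ := ⟨a * z + b, by
  have := z.im_pos
  simp only [add_im, mul_im, ofReal_re, ofReal_im, zero_mul, add_zero]
  exact mul_pos ha this⟩

lemma aff_coe (a b : ℝ) (ha : 0 < a) (z : ℍ) : (aff a b ha z : ℂ) = a * z + b := rfl

lemma S_coe (z : ℍ) : ((S • z : ℍ) : ℂ) = -(z : ℂ)⁻¹ := by
  rw [modular_S_smul]
  rw [UpperHalfPlane.coe_mk, inv_neg]

lemma T_coe (z : ℍ) : ((T • z : ℍ) : ℂ) = z + 1 := by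
  rw [modular_T_smul, coe_vadd]
  push_cast; ring

lemma aff_tendsto (a b : ℝ) (ha : 0 < a) : Tendsto (aff a b ha) atImInfty atImInfty := by
  have him : Tendsto (fun τ : ℍ ↦ τ.im) atImInfty atTop := tendsto_comap
  refine tendsto_comap_iff.mpr ?_
  refine (him.const_mul_atTop ha).congr fun z ↦ ?_
  have : (aff a b ha z).im = ((a * z + b : ℂ)).im := rfl
  simp [this]

lemma aff_D {F : ℍ → ℂ} (hF : MDiff F) (a b : ℝ) (ha : 0 < a) : MDiff (fun z ↦ F (aff a b ha z)) := by
  intro z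
  rw [UpperHalfPlane.mdifferentiableAt_iff]
  have h1 := UpperHalfPlane.mdifferentiableAt_iff.mp (hF (aff a b ha z))
  have h2 : DifferentiableAt ℂ (fun w : ℂ ↦ (a : ℂ) * w + b) z := by fun_prop
  rw [aff_coe] at h1
  refine (DifferentiableAt.comp (z : ℂ) h1 h2).congr_of_eventuallyEq ?_
  filter_upwards [isOpen_upperHalfPlaneSet.mem_nhds z.im_pos] with w hw
  have hw' : 0 < ((a : ℂ) * w + b).im := by
    simp only [add_im, mul_im, ofReal_re, ofReal_im, zero_mul, add_zero]
    exact mul_pos ha hw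
  simp only [Function.comp_apply]
  rw [ofComplex_apply_of_im_pos hw, ofComplex_apply_of_im_pos hw']
  rfl

lemma h2pos : (0 : ℝ) < 2 := by norm_num
lemma hhpos : (0 : ℝ) < 1 / 2 := by norm_num

def A0 (z : ℍ) : ℂ := 2 * E2 (aff 2 0 h2pos z) - E2 z
def A1 (z : ℍ) : ℂ := 1 / 2 * E2 (aff (1 / 2) 0 hhpos z) - E2 z
def A2 (z : ℍ) : ℂ := 1 / 2 * E2 (aff (1 / 2) (1 / 2) hhpos z) - E2 z

lemma A0md : MDiff A0 := md_sub (md_smul _ (aff_D E2_mdifferentiable _ _ _)) E2_mdifferentiable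
lemma A1md : MDiff A1 := md_sub (md_smul _ (aff_D E2_mdifferentiable _ _ _)) E2_mdifferentiable
lemma A2md : MDiff A2 := md_sub (md_smul _ (aff_D E2_mdifferentiable _ _ _)) E2_mdifferentiable

lemma A0lim : Tendsto A0 atImInfty (𝓝 1) := by
  have := ((E2lim.comp (aff_tendsto 2 0 h2pos)).const_mul 2).sub E2lim
  convert! this using 2; norm_num
lemma A1lim : Tendsto A1 atImInfty (𝓝 (-1 / 2)) := by
  have := ((E2lim.comp (aff_tendsto (1 / 2) 0 hhpos)).const_mul (1 / 2)).sub E2lim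
  convert! this using 2; norm_num
lemma A2lim : Tendsto A2 atImInfty (𝓝 (-1 / 2)) := by
  have := ((E2lim.comp (aff_tendsto (1 / 2) (1 / 2) hhpos)).const_mul (1 / 2)).sub E2lim
  convert! this using 2; norm_num

lemma pi0 : (Real.pi : ℂ) ≠ 0 := by exact_mod_cast Real.pi_ne_zero

lemma A0S (z : ℍ) : A0 (S • z) = (z : ℂ) ^ 2 * A1 z := by
  have h : aff 2 0 h2pos (S • z) = S • aff (1 / 2) 0 hhpos z := by
    apply UpperHalfPlane.ext
    have := ne_zero z
    rw [aff_coe, S_coe, S_coe, aff_coe]; push_cast; rw [add_zero, add_zero, mul_inv]; ring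
  unfold A0 A1
  rw [h, E2S, E2S, aff_coe]
  have := pi0
  push_cast; field_simp; ring

lemma A1S (z : ℍ) : A1 (S • z) = (z : ℂ) ^ 2 * A0 z := by
  have h : aff (1 / 2) 0 hhpos (S • z) = S • aff 2 0 h2pos z := by
    apply UpperHalfPlane.ext
    have := ne_zero z
    rw [aff_coe, S_coe, S_coe, aff_coe]; push_cast; rw [add_zero, add_zero, mul_inv]; ring
  unfold A0 A1
  rw [h, E2S, E2S, aff_coe]
  have := pi0
  push_cast; field_simp; ring

lemma A2S (z : ℍ) : A2 (S • z) = (z : ℂ) ^ 2 * A2 z := by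
  have hz0 := ne_zero z
  set u := aff (1 / 2) (-1 / 2) hhpos z with hu
  have hu0 := ne_zero u
  have hu1 : (z : ℂ) = 2 * u + 1 := by rw [hu, aff_coe]; push_cast; ring
  set v := aff 1 (-2) one_pos (S • u) with hv
  have hv0 := ne_zero v
  have hv1 : (v : ℂ) = -(u : ℂ)⁻¹ - 2 := by rw [hv, aff_coe, S_coe]; push_cast; ring
  have h1 : T • u = aff (1 / 2) (1 / 2) hhpos z := by
    apply UpperHalfPlane.ext
    rw [T_coe, hu, aff_coe, aff_coe]; push_cast; ring
  have h2 : T • T • v = S • u := by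
    apply UpperHalfPlane.ext
    rw [T_coe, T_coe, hv1, S_coe]; ring
  have h3 : aff (1 / 2) (1 / 2) hhpos (S • z) = S • v := by
    apply UpperHalfPlane.ext
    rw [aff_coe, S_coe, S_coe]
    have hvz : (v : ℂ) = - z / u := by rw [hv1, hu1]; field_simp; ring
    rw [hvz]
    push_cast
    field_simp
    rw [hu1]; ring
  have h4 : E2 v = E2 (S • u) := by rw [← h2, E2T, E2T]
  have hvz : (v : ℂ) * u = - z := by rw [hv1, hu1]; field_simp; ring
  have hvz2 : (v : ℂ) = - z / u := by rw [hv1, hu1]; field_simp; ring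
  unfold A2
  rw [h3, E2S, E2S, ← h1, E2T, h4, E2S, hvz2]
  have := pi0
  field_simp
  rw [hu1]
  ring

lemma A0T (z : ℍ) : A0 (T • z) = A0 z := by
  have h : aff 2 0 h2pos (T • z) = T • T • aff 2 0 h2pos z := by
    apply UpperHalfPlane.ext
    rw [aff_coe, T_coe, T_coe, T_coe, aff_coe]; push_cast; ring
  unfold A0
  rw [h, E2T, E2T, E2T]

lemma A1T (z : ℍ) : A1 (T • z) = A2 z := by
  have h : aff (1 / 2) 0 hhpos (T • z) = aff (1 / 2) (1 / 2) hhpos z := by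
    apply UpperHalfPlane.ext
    rw [aff_coe, T_coe, aff_coe]; push_cast; ring
  unfold A1 A2
  rw [h, E2T]

lemma A2T (z : ℍ) : A2 (T • z) = A1 z := by
  have h : aff (1 / 2) (1 / 2) hhpos (T • z) = T • aff (1 / 2) 0 hhpos z := by
    apply UpperHalfPlane.ext
    rw [aff_coe, T_coe, T_coe, aff_coe]; push_cast; ring
  unfold A1 A2
  rw [h, E2T, E2T]

lemma Asum (z : ℍ) : A0 z + A1 z + A2 z = 0 := by
  refine key (k := 2) (by norm_num) (F := fun z ↦ A0 z + A1 z + A2 z)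
    (md_add (md_add A0md A1md) A2md) ⟨fun z ↦ ?_, fun z ↦ ?_⟩ ?_ z
  · simp only [A0S, A1S, A2S]; ring
  · simp only [A0T, A1T, A2T]; ring
  · have := (A0lim.add A1lim).add A2lim
    convert! this using 2; norm_num

lemma Asq (z : ℍ) : (A0 z * A1 z + A0 z * A2 z + A1 z * A2 z) + 3 / 4 * e4 z = 0 := by
  refine key (k := 4) (by norm_num)
    (F := fun z ↦ (A0 z * A1 z + A0 z * A2 z + A1 z * A2 z) + 3 / 4 * e4 z)
    (md_add (md_add (md_add (md_mul A0md A1md) (md_mul A0md A2md)) (md_mul A1md A2md))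
      (md_smul _ e4md)) ⟨fun z ↦ ?_, fun z ↦ ?_⟩ ?_ z
  · have := e4inv.1 z
    simp only [A0S, A1S, A2S, this]; ring
  · have := e4inv.2 z
    simp only [A0T, A1T, A2T, this]; ring
  · have := (((A0lim.mul A1lim).add (A0lim.mul A2lim)).add (A1lim.mul A2lim)).add
      (e4lim.const_mul (3 / 4))
    convert! this using 2; norm_num

lemma Acube (z : ℍ) : A0 z * A1 z * A2 z - 1 / 4 * e6 z = 0 := by
  refine key (k := 6) (by norm_num)
    (F := fun z ↦ A0 z * A1 z * A2 z - 1 / 4 * e6 z)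
    (md_sub (md_mul (md_mul A0md A1md) A2md) (md_smul _ e6md)) ⟨fun z ↦ ?_, fun z ↦ ?_⟩ ?_ z
  · have := e6inv.1 z
    simp only [A0S, A1S, A2S, this]; ring
  · have := e6inv.2 z
    simp only [A0T, A1T, A2T, this]; ring
  · have := ((A0lim.mul A1lim).mul A2lim).sub (e6lim.const_mul (1 / 4))
    convert! this using 2; norm_num

lemma e6_eq (z : ℍ) : e6 z = 4 * A0 z ^ 3 - 3 * A0 z * e4 z := by
  have h1 := Asum z
  have h2 := Asq z
  have h3 := Acube z
  have h4 : A2 z = -A0 z - A1 z := by linear_combination h1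
  rw [h4] at h2 h3
  linear_combination (-4) * h3 + 4 * A0 z * h2

/-- pointwise derivative of a holomorphic function on the upper half-plane -/
lemma hasD {F : ℍ → ℂ} (hF : MDiff F) (z : ℍ) :
    HasDerivAt (F ∘ ofComplex) (2 * Real.pi * I * D F z) z := by
  have h := (UpperHalfPlane.mdifferentiableAt_iff.mp (hF z)).hasDerivAt
  convert! h using 1
  rw [normalizedDerivOfComplex]
  have := pi0
  have := I_ne_zero
  field_simp

lemma D_of_hasD {F : ℍ → ℂ} {c : ℂ} {z : ℍ}
    (h : HasDerivAt (F ∘ ofComplex) (2 * Real.pi * I * c) z) : D F z = c := by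
  rw [normalizedDerivOfComplex, h.deriv]
  have := pi0
  have := I_ne_zero
  field_simp

lemma D6 (z : ℍ) : D e6 z = 12 * A0 z ^ 2 * D A0 z - 3 * (D A0 z * e4 z + A0 z * D e4 z) := by
  have h : e6 = fun z ↦ 4 * A0 z ^ 3 - 3 * A0 z * e4 z := funext e6_eq
  rw [h]
  apply D_of_hasD
  have hA := hasD A0md z
  have hB := hasD e4md z
  have := ((hA.pow 3).const_mul 4).sub ((hA.const_mul 3).mul hB)
  convert! this using 1
  simp only [Function.comp_apply, ofComplex_apply]
  push_cast
  ring

lemma DA0 (z : ℍ) : D A0 z = (E2 z * A0 z - 2 * A0 z ^ 2 + e4 z) / 6 := by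
  have hm1 : MDiff (fun z ↦ 4 * (A0 z * A0 z) - e4 z) := md_sub (md_smul _ (md_mul A0md A0md)) e4md
  have hm2 : MDiff (fun z ↦ 6 * D A0 z - ((E2 z * A0 z - 2 * (A0 z * A0 z)) + e4 z)) :=
    md_sub (md_smul _ (normalizedDerivOfComplex_mdifferentiable A0md))
      (md_add (md_sub (md_mul E2_mdifferentiable A0md) (md_smul _ (md_mul A0md A0md))) e4md)
  have hprod : (fun z ↦ 4 * (A0 z * A0 z) - e4 z) *
      (fun z ↦ 6 * D A0 z - ((E2 z * A0 z - 2 * (A0 z * A0 z)) + e4 z)) = 0 := by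
    ext z
    simp only [Pi.mul_apply, Pi.zero_apply]
    have h1 := D6 z
    rw [De6, De4, e6_eq] at h1
    linear_combination (-2) * h1
  rcases (UpperHalfPlane.mul_eq_zero_iff hm1 hm2).mp hprod with h | h
  · exfalso
    have hl : Tendsto (fun z ↦ 4 * (A0 z * A0 z) - e4 z) atImInfty (𝓝 (4 * (1 * 1) - 1)) :=
      ((A0lim.mul A0lim).const_mul 4).sub e4lim
    rw [h] at hl
    have h0 : Tendsto (0 : ℍ → ℂ) atImInfty (𝓝 (0 : ℂ)) := tendsto_const_nhds
    have := tendsto_nhds_unique hl h0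
    norm_num at this
  · have := congrFun h z
    simp only [Pi.zero_apply] at this
    linear_combination this / 6

lemma DDA0 (z : ℍ) : D (D A0) z = E2 z ^ 2 * A0 z / 24 + A0 z * e4 z / 24
    - E2 z * A0 z ^ 2 / 6 + E2 z * e4 z / 12 := by
  have h : D A0 = fun z ↦ (E2 z * A0 z - 2 * A0 z ^ 2 + e4 z) / 6 := funext DA0
  rw [h]
  apply D_of_hasD
  have hA := hasD A0md z
  have hB := hasD e4md z
  have hP := hasD E2_mdifferentiable z
  have := (((hP.mul hA).sub ((hA.pow 2).const_mul 2)).add hB).div_const 6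
  convert! this using 1
  simp only [Function.comp_apply, ofComplex_apply]
  rw [DA0, DE2, De4, e6_eq]
  push_cast
  ring

lemma DDDA0 (z : ℍ) : D (D (D A0)) z = E2 z ^ 3 * A0 z / 72 + E2 z * A0 z * e4 z / 24
    - E2 z ^ 2 * A0 z ^ 2 / 12 + A0 z ^ 2 * e4 z / 24 + E2 z ^ 2 * e4 z / 24
    - A0 z ^ 4 / 18 := by
  have h : D (D A0) = fun z ↦ E2 z ^ 2 * A0 z / 24 + A0 z * e4 z / 24
    - E2 z * A0 z ^ 2 / 6 + E2 z * e4 z / 12 := funext DDA0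
  rw [h]
  apply D_of_hasD
  have hA := hasD A0md z
  have hB := hasD e4md z
  have hP := hasD E2_mdifferentiable z
  have := (((((hP.pow 2).mul hA).div_const 24).add ((hA.mul hB).div_const 24)).sub
    ((hP.mul (hA.pow 2)).div_const 6)).add ((hP.mul hB).div_const 12)
  convert! this using 1
  simp only [Function.comp_apply, ofComplex_apply, Pi.pow_apply]
  rw [DA0, DE2, De4, e6_eq]
  push_cast
  ring

lemma bridge {G : ℂ → ℂ} {F : ℍ → ℂ} (h : ∀ z : ℍ, G z = F z) (z : ℍ) : nderiv G z = D F z := by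
  rw [nderiv, normalizedDerivOfComplex]
  congr 1
  apply Filter.EventuallyEq.deriv_eq
  filter_upwards [isOpen_upperHalfPlaneSet.mem_nhds z.im_pos] with w hw
  rw [Function.comp_apply, ofComplex_apply_of_im_pos hw, ← h]

lemma lam (z : ℍ) {r : ℂ} (hr : r = cexp (2 * Real.pi * I * z)) :
    ‖r‖ < 1 ∧ HasSum (fun n : ℕ ↦ ((n : ℂ) + 1) * r ^ (n + 1) / (1 - r ^ (n + 1)))
      ((1 - E2 z) / 24) := by
  have hr1 : ‖r‖ < 1 := hr ▸ norm_exp_two_pi_I_lt_one z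
  refine ⟨hr1, ?_⟩
  have hs : Summable (fun n : ℕ ↦ ((n : ℂ) + 1) * r ^ (n + 1) / (1 - r ^ (n + 1))) := by
    have h0 := summable_norm_pow_mul_geometric_div_one_sub (𝕜 := ℂ) 1 hr1
    have h1 := (summable_nat_add_iff (f := fun n : ℕ ↦ (n : ℂ) ^ 1 * r ^ n / (1 - r ^ n)) 1).mpr h0
    refine h1.congr fun n ↦ ?_
    push_cast
    rw [pow_one]
  have h1 := E2_eq_tsum_cexp z
  rw [← hr, ← tsum_pow_div_one_sub_eq_tsum_sigma hr1 1] at h1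
  have h2 := tsum_pnat_eq_tsum_succ (f := fun n : ℕ ↦ (n : ℂ) ^ 1 * r ^ n / (1 - r ^ n))
  rw [h2] at h1
  convert! hs.hasSum using 1
  rw [h1]
  simp

lemma EPt_eq (z : ℍ) : EPt z = A0 z := by
  obtain ⟨hr, h1⟩ := lam z (r := qq z) rfl
  have hq : qq z ^ 2 = cexp (2 * Real.pi * I * (aff 2 0 h2pos z)) := by
    rw [qq, aff_coe, ← Complex.exp_nat_mul]; congr 1; push_cast; ring
  obtain ⟨_, h2⟩ := lam (aff 2 0 h2pos z) hq
  have h3 := h1.sub (h2.mul_left 2)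
  have h4 : HasSum (fun n : ℕ ↦ ((n : ℂ) + 1) * qq z ^ (n + 1) / (1 + qq z ^ (n + 1)))
      ((1 - E2 z) / 24 - 2 * ((1 - E2 (aff 2 0 h2pos z)) / 24)) := by
    convert! h3 using 1
    ext n
    have hn : ‖qq z ^ (n + 1)‖ < 1 := by
      rw [norm_pow]; exact pow_lt_one₀ (norm_nonneg _) hr (by omega)
    have e1 : 1 - qq z ^ (n + 1) ≠ 0 := by
      intro h; rw [← sub_eq_zero.mp h] at hn; simp at hn
    have e2 : 1 + qq z ^ (n + 1) ≠ 0 := by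
      intro h; rw [← neg_eq_of_add_eq_zero_right h] at hn; simp at hn
    rw [show (qq z ^ 2) ^ (n + 1) = (qq z ^ (n + 1)) ^ 2 by ring]
    have e3 : 1 - (qq z ^ (n + 1)) ^ 2 ≠ 0 := by
      rw [show 1 - (qq z ^ (n + 1)) ^ 2 = (1 - qq z ^ (n + 1)) * (1 + qq z ^ (n + 1)) by ring]
      exact mul_ne_zero e1 e2
    generalize qq z ^ (n + 1) = x at *
    rw [show 1 - x ^ 2 = (1 - x) * (1 + x) by ring]
    field_simp
    ring
  rw [EPt, h4.tsum_eq, A0]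
  ring

end Aux

/-- The weight-two modular form `𝒫̃` on `Γ₀(2)` satisfies a third-order nonlinear ODE. -/
theorem EPt_third_order_ODE :
    ∀ τ : ℂ, 0 < τ.im →
      3 * EPt τ ^ 2 * (nderiv (nderiv (nderiv EPt)) τ) ^ 2 -
      36 * (EPt τ * nderiv EPt τ * nderiv (nderiv EPt) τ - (nderiv EPt τ) ^ 3) *
        nderiv (nderiv (nderiv EPt)) τ +
      32 * EPt τ * (nderiv (nderiv EPt) τ) ^ 3 -
      3 * (12 * (nderiv EPt τ) ^ 2 + EPt τ ^ 4) * (nderiv (nderiv EPt) τ) ^ 2 +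
      9 * EPt τ ^ 3 * (nderiv EPt τ) ^ 2 * nderiv (nderiv EPt) τ -
      (27 / 4) * EPt τ ^ 2 * (nderiv EPt τ) ^ 4 = 0 := by
  intro τ hτ
  have h0 := EPt_eq ⟨τ, hτ⟩
  have h1 := bridge EPt_eq ⟨τ, hτ⟩
  have h2 := bridge (bridge EPt_eq) ⟨τ, hτ⟩
  have h3 := bridge (bridge (bridge EPt_eq)) ⟨τ, hτ⟩
  rw [DA0] at h1
  rw [DDA0] at h2
  rw [DDDA0] at h3
  simp only at h0 h1 h2 h3
  rw [h0, h1, h2, h3]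
  ring
end
end

section
/- The weight-four Eisenstein series 𝒬 on Γ₀(2) satisfies the third-order nonlinear ODE: for every τ ∈ ℍ, 4𝒬⁴(𝒬''')² − 6𝒬²𝒬'(6𝒬𝒬'' − 5(𝒬')²)𝒬''' + 16𝒬³(𝒬'')³ + 𝒬²(21(𝒬')² − 4𝒬³)(𝒬'')² − 10𝒬(𝒬')²(6(𝒬')² − 𝒬³)𝒬'' + 25(𝒬')⁶ − (25/4)𝒬³(𝒬')⁴ = 0. -/
open Complex

noncomputable section

/-- The level-two Eisenstein series `𝒬(τ) = 1 + 16 Σ_{n≥1} (−1)ⁿ n³ qⁿ/(1−qⁿ)`. -/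
def EQ : ℂ → ℂ := fun τ =>
  1 + 16 * ∑' n : ℕ, (-1 : ℂ) ^ (n + 1) * ((n : ℂ) + 1) ^ 3 * qq τ ^ (n + 1) / (1 - qq τ ^ (n + 1))

open UpperHalfPlane hiding I
open ModularForm EisensteinSeries Filter Topology
open scoped MatrixGroups Manifold ArithmeticFunction.sigma

/-- Vertical limit filter. -/
def vinf : Filter ℂ := comap Complex.im atTop

def F2 : ℂ → ℂ := fun z => EisensteinSeries.E2 (ofComplex z)
def F4 : ℂ → ℂ := fun z => (E (show 3 ≤ 4 by norm_num)) (ofComplex z)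
def F6 : ℂ → ℂ := fun z => (E (show 3 ≤ 6 by norm_num)) (ofComplex z)

lemma bern_four : bernoulli 4 = -1 / 30 := by
  rw [bernoulli_eq_bernoulli'_of_ne_one (by norm_num), bernoulli'_four]
lemma bern_six : bernoulli 6 = 1 / 42 := by
  have h5 : bernoulli' 5 = 0 := bernoulli'_eq_zero_of_odd (by decide) (by norm_num)
  rw [bernoulli_eq_bernoulli'_of_ne_one (by norm_num), bernoulli'_def]
  norm_num [Finset.sum_range_succ, h5, Nat.choose]

lemma im_S {z : ℂ} (hz : 0 < z.im) : 0 < (-1 / z).im := by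
  have h : (-1 / z) = (-z)⁻¹ := by rw [neg_div, one_div, inv_neg]
  rw [h]
  exact (⟨z, hz⟩ : ℍ).im_inv_neg_coe_pos

lemma ne_zero_of_im {z : ℂ} (hz : 0 < z.im) : z ≠ 0 := by
  rintro rfl; simp at hz

lemma ofComplex_S {z : ℂ} (hz : 0 < z.im) :
    ofComplex (-1 / z) = ModularGroup.S • ofComplex z := by
  rw [modular_S_smul]
  ext1
  rw [ofComplex_apply_of_im_pos hz, ofComplex_apply_of_im_pos (im_S hz)]
  show -1 / z = (-z)⁻¹
  rw [neg_div, one_div, inv_neg]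

lemma ofComplex_T {z : ℂ} (hz : 0 < z.im) :
    ofComplex (z + 1) = ModularGroup.T • ofComplex z := by
  rw [modular_T_smul]
  ext1
  rw [ofComplex_apply_of_im_pos hz, ofComplex_apply_of_im_pos (by simpa using hz)]
  simp [add_comm]

lemma coe_ofComplex {z : ℂ} (hz : 0 < z.im) : ((ofComplex z : ℍ) : ℂ) = z := by
  rw [ofComplex_apply_of_im_pos hz]

lemma denom_T' (w : ℍ) : denom (Matrix.SpecialLinearGroup.toGL
    ((Matrix.SpecialLinearGroup.map (Int.castRingHom ℝ)) ModularGroup.T)) (w : ℂ) = 1 := by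
  rw [ModularGroup.denom_apply]; simp [ModularGroup.T]

/-- Level one vanishing in weight `< 12`. -/
lemma level_one_zero {f : ℂ → ℂ} {k : ℕ} (hk : k < 12)
    (hd : DifferentiableOn ℂ f {z | 0 < z.im})
    (hT : ∀ z : ℂ, 0 < z.im → f (z + 1) = f z)
    (hS : ∀ z : ℂ, 0 < z.im → f (-1 / z) = z ^ k * f z)
    (h0 : Tendsto f vinf (𝓝 0)) : ∀ z : ℂ, 0 < z.im → f z = 0 := by
  let g : ℍ → ℂ := fun w => f w
  have gof : ∀ z : ℂ, 0 < z.im → g (ofComplex z) = f z := by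
    intro z hz; simp only [g]; rw [coe_ofComplex hz]
  have gS : g ∣[(k : ℤ)] ModularGroup.S = g := by
    ext w
    rw [ModularForm.SL_slash_apply, ModularGroup.denom_S]
    have := hS w w.im_pos
    rw [← gof _ (im_S w.im_pos), ofComplex_S w.im_pos, ofComplex_apply] at this
    rw [this, zpow_neg, zpow_natCast]
    have hw : (w : ℂ) ≠ 0 := w.ne_zero
    field_simp
    rfl
  have gT : g ∣[(k : ℤ)] ModularGroup.T = g := by
    ext w
    rw [ModularForm.SL_slash_apply, denom_T']
    have := hT w w.im_pos
    rw [← gof _ (by simpa using w.im_pos), ofComplex_T w.im_pos, ofComplex_apply] at this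
    rw [this]; simp [g]
  have gz : IsZeroAtImInfty g := by
    refine h0.comp ?_
    exact tendsto_coe_atImInfty
  let F : CuspForm 𝒮ℒ (k : ℤ) :=
    { toFun := g
      slash_action_eq' := by
        rintro A ⟨A, rfl⟩
        exact SlashInvariantForm.slash_action_generators_SL2Z gS gT A
      holo' := by
        rw [UpperHalfPlane.mdifferentiable_iff]
        exact hd.congr fun z hz => gof z hz
      zero_at_cusps' := by
        intro c hc
        rw [Subgroup.IsArithmetic.isCusp_iff_isCusp_SL2Z] at hc
        rw [OnePoint.isZeroAt_iff_forall_SL2Z hc]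
        intro γ _
        rw [SlashInvariantForm.slash_action_generators_SL2Z gS gT]
        exact gz }
  have hF : F = 0 := rank_zero_iff_forall_zero.mp
    (CuspForm.rank_eq_zero_of_weight_lt_twelve (by exact_mod_cast hk)) F
  intro z hz
  rw [← gof z hz]
  have : F (ofComplex z) = 0 := by rw [hF]; rfl
  exact this

lemma F2_diff : DifferentiableOn ℂ F2 {z | 0 < z.im} :=
  UpperHalfPlane.mdifferentiable_iff.mp E2_mdifferentiable
lemma F4_diff : DifferentiableOn ℂ F4 {z | 0 < z.im} :=
  UpperHalfPlane.mdifferentiable_iff.mp (ModularForm.holo' _)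
lemma F6_diff : DifferentiableOn ℂ F6 {z | 0 < z.im} :=
  UpperHalfPlane.mdifferentiable_iff.mp (ModularForm.holo' _)

lemma mf_T {k : ℤ} (f : ModularForm 𝒮ℒ k) {z : ℂ} (hz : 0 < z.im) :
    f (ofComplex (z + 1)) = f (ofComplex z) := by
  have h := f.slash_action_eq' _ ⟨ModularGroup.T, rfl⟩
  have h2 := congrFun h (ofComplex z)
  have h3 := ModularForm.SL_slash_apply (k := k) f ModularGroup.T (ofComplex z)
  rw [denom_T', ← ofComplex_T hz] at h3
  rw [one_zpow, mul_one] at h3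
  exact h3.symm.trans h2

lemma mf_S {k : ℕ} (f : ModularForm 𝒮ℒ (k : ℤ)) {z : ℂ} (hz : 0 < z.im) :
    f (ofComplex (-1 / z)) = z ^ k * f (ofComplex z) := by
  have h := f.slash_action_eq' _ ⟨ModularGroup.S, rfl⟩
  have h2 := congrFun h (ofComplex z)
  have h3 := ModularForm.SL_slash_apply (k := k) f ModularGroup.S (ofComplex z)
  rw [ModularGroup.denom_S, ← ofComplex_S hz, coe_ofComplex hz] at h3
  have h4 := h3.symm.trans h2
  rw [zpow_neg, zpow_natCast] at h4
  have := ne_zero_of_im hz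
  have h5 : f (ofComplex z) = f.toFun (ofComplex z) := rfl
  rw [h5, ← h4]
  field_simp

lemma F4_T {z : ℂ} (hz : 0 < z.im) : F4 (z + 1) = F4 z := mf_T _ hz
lemma F6_T {z : ℂ} (hz : 0 < z.im) : F6 (z + 1) = F6 z := mf_T _ hz
lemma F4_S {z : ℂ} (hz : 0 < z.im) : F4 (-1 / z) = z ^ 4 * F4 z := mf_S (k := 4) _ hz
lemma F6_S {z : ℂ} (hz : 0 < z.im) : F6 (-1 / z) = z ^ 6 * F6 z := mf_S (k := 6) _ hz

lemma F2_T {z : ℂ} (hz : 0 < z.im) : F2 (z + 1) = F2 z := by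
  have h := congrFun (E2_slash_action ModularGroup.T) (ofComplex z)
  rw [ModularForm.SL_slash_apply, denom_T', ← ofComplex_T hz, D2_T] at h
  simpa [F2] using h

lemma F2_S {z : ℂ} (hz : 0 < z.im) :
    F2 (-1 / z) = z ^ 2 * F2 z + 12 * (2 * Real.pi * Complex.I)⁻¹ * z := by
  have h := congrFun (E2_slash_action ModularGroup.S) (ofComplex z)
  rw [ModularForm.SL_slash_apply, ModularGroup.denom_S, ← ofComplex_S hz, coe_ofComplex hz] at h
  simp only [Pi.sub_apply, Pi.smul_apply, D2_S, coe_ofComplex hz, riemannZeta_two, smul_eq_mul] at h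
  have hz0 := ne_zero_of_im hz
  have hpi : (Real.pi : ℂ) ≠ 0 := by exact_mod_cast Real.pi_ne_zero
  unfold F2
  have h2 : z ^ (-2 : ℤ) = (z ^ 2)⁻¹ := by rw [zpow_neg]; norm_cast
  rw [h2] at h
  generalize EisensteinSeries.E2 (ofComplex (-1 / z)) = e at h ⊢
  generalize EisensteinSeries.E2 (ofComplex z) = e' at h ⊢
  field_simp at h
  field_simp
  linear_combination 2 * Complex.I * h - 12 * z * Complex.I_sq

lemma norm_exp_eq (z : ℂ) : ‖Complex.exp (2 * Real.pi * Complex.I * z)‖ = Real.exp (-2 * Real.pi * z.im) := by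
  rw [Complex.norm_exp]; simp

lemma tendsto_exp_vinf : Tendsto (fun z : ℂ => Complex.exp (2 * Real.pi * Complex.I * z)) vinf (𝓝 0) := by
  rw [tendsto_zero_iff_norm_tendsto_zero]
  simp_rw [norm_exp_eq]
  refine Real.tendsto_exp_atBot.comp ?_
  have : Tendsto Complex.im vinf atTop := tendsto_comap
  exact this.const_mul_atTop_of_neg (by linarith [Real.pi_pos])

lemma im_pos_vinf : ∀ᶠ z in vinf, 0 < z.im :=
  (tendsto_comap : Tendsto Complex.im vinf atTop).eventually (eventually_gt_atTop 0)

lemma sigma_tendsto (k : ℕ) : Tendsto (fun z : ℂ => ∑' n : ℕ, (σ k (n + 1) : ℂ) *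
    Complex.exp (2 * Real.pi * Complex.I * z) ^ (n + 1)) vinf (𝓝 0) := by
  have hs : Summable fun n : ℕ => ((n + 1 : ℕ) : ℝ) ^ (k + 1) * (1 / 2 : ℝ) ^ (n + 1) :=
    (summable_nat_add_iff (f := fun n : ℕ => (n : ℝ) ^ (k + 1) * (1 / 2 : ℝ) ^ n) 1).mpr
      (summable_pow_mul_geometric_of_norm_lt_one (k + 1)
        (by rw [Real.norm_eq_abs, abs_of_pos] <;> norm_num))
  have := tendsto_tsum_of_dominated_convergence (𝓕 := vinf) (g := fun _ : ℕ => (0 : ℂ))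
    (f := fun z (n : ℕ) => (σ k (n + 1) : ℂ) * Complex.exp (2 * Real.pi * Complex.I * z) ^ (n + 1)) hs ?_ ?_
  · simpa using this
  · intro n
    have := ((tendsto_exp_vinf.pow (n + 1)).const_mul (σ k (n + 1) : ℂ))
    simpa using this
  · have h := tendsto_exp_vinf.norm.eventually (eventually_le_nhds (b := (1 / 2 : ℝ)) (by simp))
    filter_upwards [h] with z hz n
    rw [norm_mul, norm_pow, Complex.norm_natCast]
    gcongr
    exact_mod_cast ArithmeticFunction.sigma_le_pow_succ k (n + 1)

lemma F2_q {z : ℂ} (hz : 0 < z.im) : F2 z = 1 - 24 * ∑' n : ℕ, (σ 1 (n + 1) : ℂ) *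
    Complex.exp (2 * Real.pi * Complex.I * z) ^ (n + 1) := by
  rw [F2, E2_eq_tsum_cexp, coe_ofComplex hz,
    tsum_pnat_eq_tsum_succ (f := fun n ↦ (σ 1 n : ℂ) * Complex.exp (2 * Real.pi * Complex.I * z) ^ n)]

lemma F4_q {z : ℂ} (hz : 0 < z.im) : F4 z = 1 + 240 * ∑' n : ℕ, (σ 3 (n + 1) : ℂ) *
    Complex.exp (2 * Real.pi * Complex.I * z) ^ (n + 1) := by
  rw [F4, q_expansion_bernoulli (k := 4) (by norm_num) (by decide), coe_ofComplex hz]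
  simp_rw [zpow_natCast]
  rw [tsum_pnat_eq_tsum_succ (f := fun n ↦ (σ (4 - 1) n : ℂ) * Complex.exp (2 * Real.pi * Complex.I * z) ^ n)]
  rw [bern_four]
  norm_num

lemma F6_q {z : ℂ} (hz : 0 < z.im) : F6 z = 1 - 504 * ∑' n : ℕ, (σ 5 (n + 1) : ℂ) *
    Complex.exp (2 * Real.pi * Complex.I * z) ^ (n + 1) := by
  rw [F6, q_expansion_bernoulli (k := 6) (by norm_num) (by decide), coe_ofComplex hz]
  simp_rw [zpow_natCast]
  rw [tsum_pnat_eq_tsum_succ (f := fun n ↦ (σ (6 - 1) n : ℂ) * Complex.exp (2 * Real.pi * Complex.I * z) ^ n)]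
  rw [bern_six]
  norm_num

lemma F2_lim : Tendsto F2 vinf (𝓝 1) := by
  have := ((sigma_tendsto 1).const_mul 24).const_sub 1
  rw [mul_zero, sub_zero] at this
  exact this.congr' (im_pos_vinf.mono fun z hz => (F2_q hz).symm)
lemma F4_lim : Tendsto F4 vinf (𝓝 1) := by
  have := ((sigma_tendsto 3).const_mul 240).const_add 1
  rw [mul_zero, add_zero] at this
  exact this.congr' (im_pos_vinf.mono fun z hz => (F4_q hz).symm)
lemma F6_lim : Tendsto F6 vinf (𝓝 1) := by
  have := ((sigma_tendsto 5).const_mul 504).const_sub 1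
  rw [mul_zero, sub_zero] at this
  exact this.congr' (im_pos_vinf.mono fun z hz => (F6_q hz).symm)

lemma EQ_eq {z : ℂ} (hz : 0 < z.im) : EQ z = (16 * F4 (2 * z) - F4 z) / 15 := by
  have h2 : 0 < (2 * z).im := by simpa using hz
  rw [F4_q hz, F4_q h2, EQ]
  set q := Complex.exp (2 * Real.pi * Complex.I * z) with hq
  have hq2 : Complex.exp (2 * Real.pi * Complex.I * (2 * z)) = q ^ 2 := by
    rw [hq, ← Complex.exp_nat_mul]; congr 1; push_cast; ring
  have hqq : qq z = q := rfl
  rw [hq2, hqq]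
  have hn : ‖q‖ < 1 := by
    rw [hq, norm_exp_eq, Real.exp_lt_one_iff]; nlinarith [Real.pi_pos]
  have key : ∀ r : ℂ, ‖r‖ < 1 → ∑' n : ℕ, (σ 3 (n + 1) : ℂ) * r ^ (n + 1) =
      ∑' n : ℕ, ((n + 1 : ℕ) : ℂ) ^ 3 * r ^ (n + 1) / (1 - r ^ (n + 1)) := by
    intro r hr
    have := tsum_pow_div_one_sub_eq_tsum_sigma hr 3
    rw [tsum_pnat_eq_tsum_succ (f := fun n : ℕ => (n : ℂ) ^ 3 * r ^ n / (1 - r ^ n)),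
      tsum_pnat_eq_tsum_succ (f := fun n : ℕ => (σ 3 n : ℂ) * r ^ n)] at this
    exact this.symm
  have hq2n : ‖q ^ 2‖ < 1 := by
    rw [norm_pow]; exact pow_lt_one₀ (norm_nonneg _) hn (by norm_num)
  set L : ℕ → ℂ := fun n => (n : ℂ) ^ 3 * q ^ n / (1 - q ^ n) with hL
  have hsum : Summable L := by
    have hb := summable_norm_pow_mul_geometric_of_norm_lt_one 3 hn
    refine Summable.of_norm_bounded (hb.mul_right (1 - ‖q‖)⁻¹) ?_
    intro n
    rcases Nat.eq_zero_or_pos n with rfl | hpos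
    · simp [hL]
    · simp only [hL]
      rw [norm_div, div_eq_mul_inv]
      have h1 : 1 - ‖q‖ ≤ ‖1 - q ^ n‖ := by
        have := norm_sub_norm_le 1 (q ^ n)
        rw [norm_one, norm_pow] at this
        have h3 : ‖q‖ ^ n ≤ ‖q‖ := pow_le_of_le_one (norm_nonneg _) hn.le hpos.ne'
        linarith
      have : 0 < 1 - ‖q‖ := by linarith
      gcongr
  have hsumA : Summable fun n => (-1 : ℂ) ^ n * L n := by
    refine Summable.of_norm (hsum.norm.congr ?_)
    intro n; simp
  have hodd : Summable fun n => L (2 * n) := hsum.comp_injective (mul_right_injective₀ two_ne_zero)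
  have e1 : ∑' n : ℕ, (-1 : ℂ) ^ (n + 1) * ((n : ℂ) + 1) ^ 3 * q ^ (n + 1) / (1 - q ^ (n + 1)) =
      ∑' n, (-1 : ℂ) ^ n * L n := by
    rw [hsumA.tsum_eq_zero_add]
    simp only [hL]
    norm_num
    refine tsum_congr fun n => ?_
    ring
  have e2 : ∑' n : ℕ, ((n + 1 : ℕ) : ℂ) ^ 3 * q ^ (n + 1) / (1 - q ^ (n + 1)) = ∑' n, L n := by
    rw [hsum.tsum_eq_zero_add]
    simp [hL]
  have e3 : ∑' n : ℕ, ((n + 1 : ℕ) : ℂ) ^ 3 * (q ^ 2) ^ (n + 1) / (1 - (q ^ 2) ^ (n + 1)) =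
      (1 / 8) * ∑' n, L (2 * n) := by
    rw [hodd.tsum_eq_zero_add]
    simp only [hL, mul_zero, Nat.cast_zero, zero_div, ne_eq, OfNat.ofNat_ne_zero, not_false_eq_true,
      zero_pow, zero_mul, zero_add]
    rw [← tsum_mul_left]
    refine tsum_congr fun n => ?_
    rw [pow_mul]; push_cast; ring
  have e4 : ∑' n, ((-1 : ℂ) ^ n * L n + L n) = 2 * ∑' n, L (2 * n) := by
    have hE : ∀ n, (-1 : ℂ) ^ (2 * n) * L (2 * n) + L (2 * n) = 2 * L (2 * n) := by
      intro n; rw [pow_mul]; norm_num; ring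
    have hO : ∀ n, (-1 : ℂ) ^ (2 * n + 1) * L (2 * n + 1) + L (2 * n + 1) = 0 := by
      intro n; rw [pow_succ, pow_mul]; norm_num
    rw [← tsum_even_add_odd (f := fun n => (-1 : ℂ) ^ n * L n + L n)]
    · simp_rw [hE, hO]
      rw [tsum_mul_left]; simp
    · simp_rw [hE]; exact hodd.mul_left 2
    · simp_rw [hO]; exact summable_zero
  rw [hsumA.tsum_add hsum] at e4
  rw [key q hn, key _ hq2n, e1, e2, e3]
  linear_combination 16 * e4

/-- The constant `2πi`. -/
def tpi : ℂ := 2 * Real.pi * Complex.I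

lemma tpi_ne : tpi ≠ 0 := by
  have hpi : (Real.pi : ℂ) ≠ 0 := by exact_mod_cast Real.pi_ne_zero
  simp [tpi, hpi]

/-- `f` has normalized derivative `f'` at `z`. -/
def HND (f : ℂ → ℂ) (f' z : ℂ) : Prop := HasDerivAt f (tpi * f') z

lemma HND.nderiv {f : ℂ → ℂ} {f' z : ℂ} (h : HND f f' z) : nderiv f z = f' := by
  have : deriv f z = tpi * f' := HasDerivAt.deriv h
  show tpi⁻¹ * deriv f z = f'
  rw [this, inv_mul_cancel_left₀ tpi_ne]

lemma hnd_of_diff {f : ℂ → ℂ} (hf : DifferentiableOn ℂ f {z | 0 < z.im}) {z : ℂ} (hz : 0 < z.im) :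
    HND f (nderiv f z) z := by
  have h1 : HasDerivAt f (deriv f z) z :=
    (hf.differentiableAt (isOpen_upperHalfPlaneSet.mem_nhds hz)).hasDerivAt
  have h2 : tpi * nderiv f z = deriv f z := by
    show tpi * (tpi⁻¹ * deriv f z) = _
    rw [mul_inv_cancel_left₀ tpi_ne]
  unfold HND
  rw [h2]; exact h1

lemma HND.congr' {f g : ℂ → ℂ} {g' z : ℂ} (h : HND g g' z) (hz : 0 < z.im)
    (hfg : ∀ z : ℂ, 0 < z.im → f z = g z) : HND f g' z := by
  refine HasDerivAt.congr_of_eventuallyEq h ?_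
  filter_upwards [isOpen_upperHalfPlaneSet.mem_nhds hz] with w hw using hfg w hw

lemma HND.cast {f : ℂ → ℂ} {a b z : ℂ} (h : HND f a z) (hab : a = b) : HND f b z := hab ▸ h

lemma HND.add {f g : ℂ → ℂ} {f' g' z : ℂ} (hf : HND f f' z) (hg : HND g g' z) :
    HND (fun w => f w + g w) (f' + g') z := by
  have := HasDerivAt.add hf hg
  unfold HND; rw [mul_add]; exact this

lemma HND.sub {f g : ℂ → ℂ} {f' g' z : ℂ} (hf : HND f f' z) (hg : HND g g' z) :
    HND (fun w => f w - g w) (f' - g') z := by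
  have := HasDerivAt.sub hf hg
  unfold HND; rw [mul_sub]; exact this

lemma HND.mul {f g : ℂ → ℂ} {f' g' z : ℂ} (hf : HND f f' z) (hg : HND g g' z) :
    HND (fun w => f w * g w) (f' * g z + f z * g') z := by
  have := HasDerivAt.mul hf hg
  unfold HND; convert! this using 1; ring

lemma HND.const_mul {f : ℂ → ℂ} {f' z : ℂ} (c : ℂ) (hf : HND f f' z) :
    HND (fun w => c * f w) (c * f') z := by
  have := HasDerivAt.const_mul c hf
  unfold HND; convert! this using 1; ring

lemma nderiv_diff {f : ℂ → ℂ} (hf : DifferentiableOn ℂ f {z | 0 < z.im}) :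
    DifferentiableOn ℂ (nderiv f) {z | 0 < z.im} :=
  (hf.deriv isOpen_upperHalfPlaneSet).const_mul _

lemma nderiv_T {f : ℂ → ℂ} (hf : DifferentiableOn ℂ f {z | 0 < z.im})
    (hT : ∀ z : ℂ, 0 < z.im → f (z + 1) = f z) {z : ℂ} (hz : 0 < z.im) :
    nderiv f (z + 1) = nderiv f z := by
  have h1 : HND f (nderiv f (z + 1)) (z + 1) := hnd_of_diff hf (by simpa using hz)
  have h2 : HND (fun w => f (w + 1)) (nderiv f (z + 1)) z := HasDerivAt.comp_add_const z 1 h1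
  exact (HND.nderiv (h2.congr' hz fun w hw => (hT w hw).symm)).symm

lemma nderiv_S {f : ℂ → ℂ} {j : ℕ} {c : ℂ} (hf : DifferentiableOn ℂ f {z | 0 < z.im})
    (hS : ∀ z : ℂ, 0 < z.im → f (-1 / z) = z ^ (j + 1) * f z + c * z) {z : ℂ} (hz : 0 < z.im) :
    nderiv f (-1 / z) = z ^ (j + 3) * nderiv f z +
      tpi⁻¹ * ((j + 1) * z ^ (j + 2) * f z + c * z ^ 2) := by
  have hz0 := ne_zero_of_im hz
  have h1 : HasDerivAt f (tpi * nderiv f (-1 / z)) (-1 / z) := hnd_of_diff hf (im_S hz)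
  have hi : HasDerivAt (fun w : ℂ => -1 / w) (1 / z ^ 2) z := by
    have := (hasDerivAt_inv hz0).neg
    convert! this using 1
    · ext w; simp [neg_div]
    · simp
  have h2 := HasDerivAt.comp z h1 hi
  have h3 : HasDerivAt f (tpi * nderiv f z) z := hnd_of_diff hf hz
  have h4 := ((hasDerivAt_pow (j + 1) z).mul h3).add ((hasDerivAt_id z).const_mul c)
  have h5 : HasDerivAt (f ∘ fun w : ℂ => -1 / w) _ z := h4.congr_of_eventuallyEq (by
    filter_upwards [isOpen_upperHalfPlaneSet.mem_nhds hz] with w hw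
    simpa using hS w hw)
  have h6 := h2.unique h5
  have ht := tpi_ne
  simp only [Nat.add_sub_cancel] at h6
  push_cast at h6
  field_simp at h6 ⊢
  linear_combination h6

lemma nderiv_lim {f : ℂ → ℂ} {c : ℂ} (hf : DifferentiableOn ℂ f {z | 0 < z.im})
    (hl : Tendsto f vinf (𝓝 c)) : Tendsto (nderiv f) vinf (𝓝 0) := by
  have key : Tendsto (deriv f) vinf (𝓝 0) := by
    rw [Metric.tendsto_nhds]
    intro ε hε
    have h1 := (Metric.tendsto_nhds.mp hl) (ε / 2) (by positivity)
    rw [vinf, Filter.eventually_comap] at h1 ⊢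
    obtain ⟨B, hB⟩ := eventually_atTop.mp h1
    filter_upwards [eventually_ge_atTop (max B 0 + 2)] with y hy z hzy
    have him : ∀ w ∈ Metric.closedBall z 1, max B 0 + 1 ≤ w.im := by
      intro w hw
      have h3 : |(w - z).im| ≤ ‖w - z‖ := Complex.abs_im_le_norm _
      rw [Metric.mem_closedBall, dist_eq_norm] at hw
      rw [Complex.sub_im] at h3
      have := (abs_le.mp (h3.trans hw)).1
      linarith
    have hpos : ∀ w ∈ Metric.closedBall z 1, 0 < w.im := fun w hw => by
      have := him w hw; have := le_max_right B 0; linarith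
    have hdc : DiffContOnCl ℂ (fun w => f w - c) (Metric.ball z 1) := by
      apply DifferentiableOn.diffContOnCl
      rw [closure_ball _ one_ne_zero]
      exact (hf.mono hpos).sub_const c
    have := Complex.norm_deriv_le_of_forall_mem_sphere_norm_le (C := ε / 2) one_pos hdc (by
      intro w hw
      have hw' := Metric.sphere_subset_closedBall hw
      have h5 := hB w.im (by have := him w hw'; have := le_max_left B 0; linarith) w rfl
      rw [dist_eq_norm] at h5
      exact h5.le)
    rw [deriv_sub_const] at this
    rw [dist_zero_right]
    linarith
  have := key.const_mul (2 * Real.pi * Complex.I)⁻¹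
  rw [mul_zero] at this
  exact this

lemma ram2 {z : ℂ} (hz : 0 < z.im) : nderiv F2 z = (F2 z ^ 2 - F4 z) / 12 := by
  have h := level_one_zero (k := 4) (f := fun z => nderiv F2 z - F2 z ^ 2 / 12 + F4 z / 12) (by norm_num)
    (((nderiv_diff F2_diff).sub ((F2_diff.pow 2).div_const 12)).add (F4_diff.div_const 12))
    (fun z hz => by
      rw [nderiv_T F2_diff (fun w hw => F2_T hw) hz, F2_T hz, F4_T hz])
    (fun z hz => by
      rw [nderiv_S (j := 1) F2_diff (fun w hw => F2_S hw) hz, F2_S hz, F4_S hz]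
      rw [← tpi]
      push_cast
      ring)
    (by
      have := ((nderiv_lim F2_diff F2_lim).sub ((F2_lim.pow 2).div_const 12)).add (F4_lim.div_const 12)
      simpa using this) z hz
  linear_combination h

lemma ram4 {z : ℂ} (hz : 0 < z.im) : nderiv F4 z = (F2 z * F4 z - F6 z) / 3 := by
  have h := level_one_zero (k := 6) (f := fun z => nderiv F4 z - F2 z * F4 z / 3 + F6 z / 3) (by norm_num)
    (((nderiv_diff F4_diff).sub ((F2_diff.mul F4_diff).div_const 3)).add (F6_diff.div_const 3))
    (fun z hz => by
      rw [nderiv_T F4_diff (fun w hw => F4_T hw) hz, F2_T hz, F4_T hz, F6_T hz])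
    (fun z hz => by
      rw [nderiv_S (j := 3) (c := 0) F4_diff (fun w hw => by rw [F4_S hw]; ring) hz, F2_S hz, F4_S hz,
        F6_S hz]
      rw [← tpi]
      push_cast
      ring)
    (by
      have := ((nderiv_lim F4_diff F4_lim).sub ((F2_lim.mul F4_lim).div_const 3)).add (F6_lim.div_const 3)
      simpa using this) z hz
  linear_combination h

lemma ram6 {z : ℂ} (hz : 0 < z.im) : nderiv F6 z = (F2 z * F6 z - F4 z ^ 2) / 2 := by
  have h := level_one_zero (k := 8) (f := fun z => nderiv F6 z - F2 z * F6 z / 2 + F4 z ^ 2 / 2) (by norm_num)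
    (((nderiv_diff F6_diff).sub ((F2_diff.mul F6_diff).div_const 2)).add ((F4_diff.pow 2).div_const 2))
    (fun z hz => by
      rw [nderiv_T F6_diff (fun w hw => F6_T hw) hz, F2_T hz, F4_T hz, F6_T hz])
    (fun z hz => by
      rw [nderiv_S (j := 5) (c := 0) F6_diff (fun w hw => by rw [F6_S hw]; ring) hz, F2_S hz, F4_S hz,
        F6_S hz]
      rw [← tpi]
      push_cast
      ring)
    (by
      have := ((nderiv_lim F6_diff F6_lim).sub ((F2_lim.mul F6_lim).div_const 2)).add
        ((F4_lim.pow 2).div_const 2)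
      simpa using this) z hz
  linear_combination h

/-! ### The three conjugate weight two forms -/

def e1 (z : ℂ) : ℂ := 2 * F2 (2 * z) - F2 z
def e2 (z : ℂ) : ℂ := F2 (z / 2) / 2 - F2 z
def e3 (z : ℂ) : ℂ := F2 ((z + 1) / 2) / 2 - F2 z

lemma im2 {z : ℂ} (hz : 0 < z.im) : 0 < (2 * z).im := by simpa using hz
lemma imh {z : ℂ} (hz : 0 < z.im) : 0 < (z / 2).im := by simpa using hz
lemma imh1 {z : ℂ} (hz : 0 < z.im) : 0 < ((z + 1) / 2).im := by simpa using hz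

lemma e1_diff : DifferentiableOn ℂ e1 {z | 0 < z.im} := by
  refine DifferentiableOn.sub (DifferentiableOn.const_mul ?_ _) F2_diff
  exact F2_diff.comp (by fun_prop) fun z hz => im2 hz
lemma e2_diff : DifferentiableOn ℂ e2 {z | 0 < z.im} := by
  refine DifferentiableOn.sub (DifferentiableOn.div_const ?_ _) F2_diff
  exact F2_diff.comp (by fun_prop) fun z hz => imh hz
lemma e3_diff : DifferentiableOn ℂ e3 {z | 0 < z.im} := by
  refine DifferentiableOn.sub (DifferentiableOn.div_const ?_ _) F2_diff
  exact F2_diff.comp (by fun_prop) fun z hz => imh1 hz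

lemma e1_T {z : ℂ} (hz : 0 < z.im) : e1 (z + 1) = e1 z := by
  simp only [e1]
  rw [F2_T hz, show 2 * (z + 1) = 2 * z + 1 + 1 by ring, F2_T (by simpa using hz), F2_T (im2 hz)]
lemma e2_T {z : ℂ} (hz : 0 < z.im) : e2 (z + 1) = e3 z := by
  simp only [e2, e3]
  rw [F2_T hz]
lemma e3_T {z : ℂ} (hz : 0 < z.im) : e3 (z + 1) = e2 z := by
  simp only [e2, e3]
  rw [F2_T hz, show (z + 1 + 1) / 2 = z / 2 + 1 by ring, F2_T (imh hz)]

lemma e1_S {z : ℂ} (hz : 0 < z.im) : e1 (-1 / z) = z ^ 2 * e2 z := by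
  have hz0 := ne_zero_of_im hz
  simp only [e1, e2]
  rw [show 2 * (-1 / z) = -1 / (z / 2) by field_simp, F2_S (imh hz), F2_S hz]
  ring
lemma e2_S {z : ℂ} (hz : 0 < z.im) : e2 (-1 / z) = z ^ 2 * e1 z := by
  have hz0 := ne_zero_of_im hz
  simp only [e1, e2]
  rw [show (-1 / z) / 2 = -1 / (2 * z) by field_simp, F2_S (im2 hz), F2_S hz]
  ring
lemma e3_S {z : ℂ} (hz : 0 < z.im) : e3 (-1 / z) = z ^ 2 * e3 z := by
  have hz0 := ne_zero_of_im hz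
  have hm : 0 < (z - 1).im := by simpa using hz
  have hm0 := ne_zero_of_im hm
  have hm2 : 0 < ((z - 1) / 2).im := imh hm
  set w : ℂ := -1 / ((z - 1) / 2) with hw
  have hwi : 0 < w.im := im_S hm2
  have hw1 : 0 < (w - 1).im := by simpa using hwi
  have hw2 : 0 < (w - 1 - 1).im := by simpa using hw1
  have a1 : F2 w = F2 (w - 1 - 1) := by
    rw [← F2_T hw2, ← F2_T (z := w - 1 - 1 + 1) (by simpa using hw2)]
    congr 1; ring
  have a2 := F2_S hm2
  have a3 : F2 ((z - 1) / 2) = F2 ((z + 1) / 2) := by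
    rw [← F2_T hm2]; congr 1; ring
  have a4 := F2_S hw2
  have hwv : w - 1 - 1 = -2 * z / (z - 1) := by
    rw [hw]; field_simp; ring
  have a5 : -1 / (w - 1 - 1) = (-1 / z + 1) / 2 := by
    rw [hwv]; field_simp; ring
  rw [a5, ← a1, a2, a3, hwv] at a4
  simp only [e3]
  rw [a4, F2_S hz]
  field_simp
  ring

lemma vinf_tendsto {g : ℂ → ℂ} {r : ℝ} (hr : 0 < r) (hg : ∀ z, (g z).im = r * z.im) :
    Tendsto g vinf vinf := by
  unfold vinf
  rw [tendsto_comap_iff]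
  have : (Complex.im ∘ g) = fun z => r * z.im := by ext z; exact hg z
  rw [this]
  exact tendsto_comap.const_mul_atTop hr

lemma e1_lim : Tendsto e1 vinf (𝓝 1) := by
  have := ((F2_lim.comp (vinf_tendsto (g := fun z => 2 * z) two_pos (by simp))).const_mul 2).sub F2_lim
  convert! this using 2; norm_num
lemma e2_lim : Tendsto e2 vinf (𝓝 (-1 / 2)) := by
  have := ((F2_lim.comp (vinf_tendsto (g := fun z => z / 2) (r := 1 / 2) (by norm_num)
    (by intro z; simp; ring))).div_const 2).sub F2_lim
  convert! this using 2; norm_num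
lemma e3_lim : Tendsto e3 vinf (𝓝 (-1 / 2)) := by
  have := ((F2_lim.comp (vinf_tendsto (g := fun z => (z + 1) / 2) (r := 1 / 2) (by norm_num)
    (by intro z; simp; ring))).div_const 2).sub F2_lim
  convert! this using 2; norm_num

lemma sym1 {z : ℂ} (hz : 0 < z.im) : e1 z + e2 z + e3 z = 0 :=
  level_one_zero (k := 2) (f := fun z => e1 z + e2 z + e3 z) (by norm_num)
    ((e1_diff.add e2_diff).add e3_diff)
    (fun z hz => by rw [e1_T hz, e2_T hz, e3_T hz]; ring)
    (fun z hz => by rw [e1_S hz, e2_S hz, e3_S hz]; ring)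
    (by
      have := (e1_lim.add e2_lim).add e3_lim
      convert! this using 2; norm_num) z hz

lemma sym2 {z : ℂ} (hz : 0 < z.im) :
    e1 z * e2 z + e1 z * e3 z + e2 z * e3 z + 3 / 4 * F4 z = 0 :=
  level_one_zero (k := 4) (f := fun z => e1 z * e2 z + e1 z * e3 z + e2 z * e3 z + 3 / 4 * F4 z)
    (by norm_num)
    ((((e1_diff.mul e2_diff).add (e1_diff.mul e3_diff)).add (e2_diff.mul e3_diff)).add
      (F4_diff.const_mul _))
    (fun z hz => by rw [e1_T hz, e2_T hz, e3_T hz, F4_T hz]; ring)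
    (fun z hz => by rw [e1_S hz, e2_S hz, e3_S hz, F4_S hz]; ring)
    (by
      have := (((e1_lim.mul e2_lim).add (e1_lim.mul e3_lim)).add (e2_lim.mul e3_lim)).add
        (F4_lim.const_mul (3 / 4))
      convert! this using 2; norm_num) z hz

lemma sym3 {z : ℂ} (hz : 0 < z.im) : e1 z * e2 z * e3 z - 1 / 4 * F6 z = 0 :=
  level_one_zero (k := 6) (f := fun z => e1 z * e2 z * e3 z - 1 / 4 * F6 z)
    (by norm_num)
    (((e1_diff.mul e2_diff).mul e3_diff).sub (F6_diff.const_mul _))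
    (fun z hz => by rw [e1_T hz, e2_T hz, e3_T hz, F6_T hz]; ring)
    (fun z hz => by rw [e1_S hz, e2_S hz, e3_S hz, F6_S hz]; ring)
    (by
      have := ((e1_lim.mul e2_lim).mul e3_lim).sub (F6_lim.const_mul (1 / 4))
      convert! this using 2; norm_num) z hz

lemma cubic {z : ℂ} (hz : 0 < z.im) : F6 z = 4 * (e1 z * (e1 z * e1 z)) - 3 * (F4 z * e1 z) := by
  have h1 := sym1 hz
  have h2 := sym2 hz
  have h3 := sym3 hz
  have h4 : e3 z = - e1 z - e2 z := by linear_combination h1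
  rw [h4] at h2 h3
  linear_combination (-4) * h3 + 4 * e1 z * h2

lemma e1_hnd {z : ℂ} (hz : 0 < z.im) : HND e1
    ((e1 z ^ 2 + 2 * F2 z * e1 z - 4 * F4 (2 * z) + F4 z) / 12) z := by
  have h1 : HND F2 ((F2 (2 * z) ^ 2 - F4 (2 * z)) / 12) (2 * z) :=
    (hnd_of_diff F2_diff (im2 hz)).cast (ram2 (im2 hz))
  have h2 : HND (fun w => F2 (2 * w)) (2 * ((F2 (2 * z) ^ 2 - F4 (2 * z)) / 12)) z := by
    have h3 : HasDerivAt (fun w : ℂ => 2 * w) 2 z := by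
      simpa using (hasDerivAt_id z).const_mul 2
    have := HasDerivAt.comp z h1 h3
    unfold HND
    convert! this using 1
    ring
  have h4 : HND F2 ((F2 z ^ 2 - F4 z) / 12) z := (hnd_of_diff F2_diff hz).cast (ram2 hz)
  refine ((h2.const_mul 2).sub h4).cast ?_
  simp only [e1]
  ring

lemma F4_hnd {z : ℂ} (hz : 0 < z.im) : HND F4 ((F2 z * F4 z - F6 z) / 3) z :=
  (hnd_of_diff F4_diff hz).cast (ram4 hz)
lemma F2_hnd {z : ℂ} (hz : 0 < z.im) : HND F2 ((F2 z ^ 2 - F4 z) / 12) z :=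
  (hnd_of_diff F2_diff hz).cast (ram2 hz)

lemma prod_zero {z : ℂ} (hz : 0 < z.im) :
    (4 * e1 z ^ 2 - F4 z) * (5 * e1 z ^ 2 - F4 z - 4 * F4 (2 * z)) = 0 := by
  have h1 := e1_hnd hz
  have h2 := ((h1.mul (h1.mul h1)).const_mul 4).sub (((F4_hnd hz).mul h1).const_mul 3)
  have h3 := (h2.congr' hz fun w hw => cubic hw).nderiv
  rw [ram6 hz, cubic hz] at h3
  linear_combination (-4) * h3

instance : vinf.NeBot := by
  unfold vinf
  refine Filter.comap_neBot fun t ht => ?_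
  obtain ⟨B, hB⟩ := mem_atTop_sets.mp ht
  exact ⟨⟨0, B⟩, hB B le_rfl⟩

lemma rel4 {z : ℂ} (hz : 0 < z.im) : 4 * F4 (2 * z) = 5 * e1 z ^ 2 - F4 z := by
  have hF : DifferentiableOn ℂ (fun w => F4 (2 * w)) {z | 0 < z.im} :=
    F4_diff.comp (differentiableOn_id.const_mul 2) fun w hw => im2 hw
  have hd1 : DifferentiableOn ℂ (fun w => 4 * e1 w ^ 2 - F4 w) {z | 0 < z.im} :=
    ((e1_diff.pow 2).const_mul 4).sub F4_diff
  have hd2 : DifferentiableOn ℂ (fun w => 5 * e1 w ^ 2 - F4 w - 4 * F4 (2 * w)) {z | 0 < z.im} :=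
    (((e1_diff.pow 2).const_mul 5).sub F4_diff).sub (hF.const_mul 4)
  have hU : IsPreconnected {z : ℂ | 0 < z.im} := (convex_halfSpace_im_gt 0).isPreconnected
  rcases AnalyticOnNhd.eq_zero_or_eq_zero_of_smul_eq_zero
    (hd1.analyticOnNhd isOpen_upperHalfPlaneSet) (hd2.analyticOnNhd isOpen_upperHalfPlaneSet)
    (fun w hw => by simpa only [smul_eq_mul] using prod_zero hw) hU with h | h
  · exfalso
    have h1 : Tendsto (fun w => 4 * e1 w ^ 2 - F4 w) vinf (𝓝 (4 * 1 ^ 2 - 1)) :=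
      ((e1_lim.pow 2).const_mul 4).sub F4_lim
    have h2 : Tendsto (fun w => 4 * e1 w ^ 2 - F4 w) vinf (𝓝 0) := by
      refine tendsto_const_nhds.congr' ?_
      filter_upwards [im_pos_vinf] with w hw using (h w hw).symm
    have h3 := tendsto_nhds_unique h1 h2
    norm_num at h3
  · linear_combination -(h z hz)

/-- The weight two quasimodular form of level two. -/
def PP (z : ℂ) : ℂ := (2 / 3) * e1 z + (1 / 3) * F2 z

lemma EQ_eq2 {z : ℂ} (hz : 0 < z.im) :
    EQ z = (4 / 3) * (e1 z * e1 z) - (1 / 3) * F4 z := by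
  rw [EQ_eq hz]
  linear_combination (4 / 15) * rel4 hz

lemma PP_hnd {z : ℂ} (hz : 0 < z.im) : HND PP ((PP z ^ 2 - EQ z) / 4) z := by
  refine (((e1_hnd hz).const_mul (2 / 3)).add ((F2_hnd hz).const_mul (1 / 3))).cast ?_
  rw [EQ_eq2 hz, rel4 hz, PP]
  ring

lemma RR_hnd {z : ℂ} (hz : 0 < z.im) : HND e1 ((e1 z * PP z - EQ z) / 2) z := by
  refine (e1_hnd hz).cast ?_
  rw [EQ_eq2 hz, rel4 hz, PP]
  ring

lemma QQ_hnd {z : ℂ} (hz : 0 < z.im) : HND EQ (EQ z * (PP z - e1 z)) z := by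
  refine HND.congr' (((((e1_hnd hz).mul (e1_hnd hz)).const_mul (4 / 3)).sub
    ((F4_hnd hz).const_mul (1 / 3))).cast ?_) hz fun w hw => EQ_eq2 hw
  rw [EQ_eq2 hz, rel4 hz, cubic hz, PP]
  ring

lemma D1 {z : ℂ} (hz : 0 < z.im) : nderiv EQ z = EQ z * (PP z - e1 z) := (QQ_hnd hz).nderiv

lemma D2_hnd {z : ℂ} (hz : 0 < z.im) : HND (nderiv EQ)
    (EQ z * ((PP z - e1 z) ^ 2 + (PP z ^ 2 - 2 * PP z * e1 z + EQ z) / 4)) z := by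
  refine HND.congr' (((QQ_hnd hz).mul ((PP_hnd hz).sub (RR_hnd hz))).cast ?_) hz fun w hw => D1 hw
  ring

lemma D2 {z : ℂ} (hz : 0 < z.im) : nderiv (nderiv EQ) z =
    EQ z * ((PP z - e1 z) * (PP z - e1 z) +
      (1 / 4) * (PP z * PP z - 2 * (PP z * e1 z) + EQ z)) := by
  rw [(D2_hnd hz).nderiv]
  ring

lemma D3 {z : ℂ} (hz : 0 < z.im) : nderiv (nderiv (nderiv EQ)) z =
    EQ z * ((PP z - e1 z) ^ 3 +
      3 * (PP z - e1 z) * ((PP z ^ 2 - 2 * PP z * e1 z + EQ z) / 4) +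
      ((PP z - e1 z) * (PP z ^ 2 - EQ z) / 2 - PP z * (e1 z * PP z - EQ z) +
        EQ z * (PP z - e1 z)) / 4) := by
  have hP := PP_hnd hz
  have hR := RR_hnd hz
  have hQ := QQ_hnd hz
  have hu := hP.sub hR
  have hv := (((hP.mul hP).sub ((hP.mul hR).const_mul 2)).add hQ).const_mul (1 / 4)
  have h := (hQ.mul ((hu.mul hu).add hv)).congr' hz fun w hw => D2 hw
  rw [h.nderiv]
  ring

/-- The weight-four Eisenstein series `𝒬` on `Γ₀(2)` satisfies a third-order nonlinear ODE. -/
theorem EQ_third_order_ODE :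
    ∀ τ : ℂ, 0 < τ.im →
      4 * EQ τ ^ 4 * (nderiv (nderiv (nderiv EQ)) τ) ^ 2 -
      6 * EQ τ ^ 2 * nderiv EQ τ * (6 * EQ τ * nderiv (nderiv EQ) τ - 5 * (nderiv EQ τ) ^ 2) *
        nderiv (nderiv (nderiv EQ)) τ +
      16 * EQ τ ^ 3 * (nderiv (nderiv EQ) τ) ^ 3 +
      EQ τ ^ 2 * (21 * (nderiv EQ τ) ^ 2 - 4 * EQ τ ^ 3) * (nderiv (nderiv EQ) τ) ^ 2 -
      10 * EQ τ * (nderiv EQ τ) ^ 2 * (6 * (nderiv EQ τ) ^ 2 - EQ τ ^ 3) *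
        nderiv (nderiv EQ) τ +
      25 * (nderiv EQ τ) ^ 6 - (25 / 4) * EQ τ ^ 3 * (nderiv EQ τ) ^ 4 = 0 := by
  intro τ hτ
  rw [D3 hτ, D2 hτ, D1 hτ]
  ring
end
end
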